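/- Let r, n, m ≥ 1 and let μ, ν be partitions of r with at most n and at most m parts respectively. Then the number of one-row lexicographic bitableaux T ∈ B_{(r)}(n,m) with a(T) = μ, b(T) = ν, and such that both w(T) and u(T) are Yamanouchi, equals 1 if μ = ν and 0 otherwise. -/

import Mathlib

/-- Lexicographic (weak) order on pairs: `(a,b) ≤ (a',b')` iff `a < a'`, or `a = a'` and `b ≤ b'`. -/
def lexLe (p q : ℕ × ℕ) : Prop := p.1 < q.1 ∨ (p.1 = q.1 ∧ p.2 ≤ q.2)

/-- Lexicographic strict order on pairs. -/
def lexLt (p q : ℕ × ℕ) : Prop := p.1 < q.1 ∨ (p.1 = q.1 ∧ p.2 < q.2)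

instance : DecidableRel lexLe := fun p q =>
  inferInstanceAs (Decidable (p.1 < q.1 ∨ (p.1 = q.1 ∧ p.2 ≤ q.2)))

instance : DecidableRel lexLt := fun p q =>
  inferInstanceAs (Decidable (p.1 < q.1 ∨ (p.1 = q.1 ∧ p.2 < q.2)))

/-- Row-insert the value `v` into the tableau `P` (a list of rows): `v` is appended at the end
of the first row if it is at least as large as every entry there; otherwise it replaces the
leftmost entry strictly larger than `v`, which is then inserted into the next row. -/
def insRow (v : ℕ) : List (List ℕ) → List (List ℕ)
  | [] => [[v]]
  | r :: rest =>
    match r.findIdx? (fun x => decide (v < x)) with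
    | none => (r ++ [v]) :: rest
    | some idx => (r.set idx v) :: insRow (r.getD idx 0) rest

/-- The insertion tableau `P(w)` of a word: successively row-insert the letters of `w`,
starting from the empty tableau. -/
def Pword (w : List ℕ) : List (List ℕ) :=
  w.foldl (fun t v => insRow v t) []

/-- The index of the row in which `p'` (the result of a row insertion into `p`) has one more
box than `p`. -/
def growIdx (p p' : List (List ℕ)) : ℕ :=
  (List.range p'.length).findIdx fun r => decide ((p.getD r []).length ≠ (p'.getD r []).length)

/-- Append the value `a` at the end of row `r` of the tableau `q`. -/
def addBox (q : List (List ℕ)) (r a : ℕ) : List (List ℕ) :=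
  if r < q.length then q.set r (q.getD r [] ++ [a]) else q ++ [[a]]

/-- The RSK correspondence applied to a biword, given as a list of (top, bottom) pairs:
the bottom entries are row-inserted in order to form the insertion tableau `P`, and the top
entries are recorded in the newly created boxes to form the recording tableau `Q`. -/
def rsk (w : List (ℕ × ℕ)) : List (List ℕ) × List (List ℕ) :=
  w.foldl (fun PQ ab =>
    let P' := insRow ab.2 PQ.1
    (P', addBox PQ.2 (growIdx PQ.1 P') ab.1)) ([], [])

/-- A word is Yamanouchi if for every `i ≥ 1`, every suffix contains at least as many letters
`i` as letters `i+1`. -/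
def Yamanouchi (w : List ℕ) : Prop :=
  ∀ i : ℕ, 1 ≤ i → ∀ s ∈ w.tails, s.count (i + 1) ≤ s.count i

/-- A one-row lexicographic bitableau in `B_{(r)}(n,m)`, encoded as its list of entries read
left to right: pairs in `{1,…,n} × {1,…,m}`, weakly increasing in lexicographic order. -/
def IsRowBitab (n m r : ℕ) (L : List (ℕ × ℕ)) : Prop :=
  L.length = r ∧ (∀ p ∈ L, (1 ≤ p.1 ∧ p.1 ≤ n) ∧ (1 ≤ p.2 ∧ p.2 ≤ m)) ∧ L.Chain' lexLe

/-- The sort-by-top reading word `w(T)` of a one-row bitableau: for `k = 1, …, n` in increasing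
order, the second coordinates of the boxes with first coordinate `k`, read left to right. -/
def wRow (n : ℕ) (L : List (ℕ × ℕ)) : List ℕ :=
  (List.range n).flatMap fun k => (L.filter fun p => decide (p.1 = k + 1)).map Prod.snd

/-- The reading word `u(T)` of a one-row bitableau: for `k = 1, …, m` in increasing order,
the first coordinates of the boxes with second coordinate `k`, read left to right. -/
def uRow (m : ℕ) (L : List (ℕ × ℕ)) : List ℕ :=
  (List.range m).flatMap fun k => (L.filter fun p => decide (p.2 = k + 1)).map Prod.fst

open scoped Classical

/-- The `i`-th part (1-indexed) of a partition, `0` if `i` exceeds the number of parts. -/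
def partAt {r : ℕ} (μ : Nat.Partition r) (i : ℕ) : ℕ :=
  (μ.parts.sort (· ≥ ·)).getD (i - 1) 0

/-- The list of entries of a one-row bitableau encoded by `v : Fin r → Fin n × Fin m`
(the box `t` has entry `((v t).1 + 1, (v t).2 + 1) ∈ {1,…,n} × {1,…,m}`). -/
def rowList {n m r : ℕ} (v : Fin r → Fin n × Fin m) : List (ℕ × ℕ) :=
  (List.ofFn v).map fun p => (((p.1 : ℕ) + 1, (p.2 : ℕ) + 1))

/-!
Let `M i j` be the number of boxes `(i, j)` of `T`, and `N i j` the number of boxes `(i', j')`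
with `i' ≥ i` and `j' ≥ j`. Every block of `w(T)` is weakly increasing, so `w(T)` is Yamanouchi iff
`∑_{i' ≥ i} M i' (j + 1) ≤ ∑_{i' > i} M i' j` for all `i, j ≥ 1`; summing over the columns from `j`
on gives `N i (j + 1) ≤ N (i + 1) j`. The word `u(T)` gives the reverse inequality, so
`N` depends on `i + j` only. Hence `N` is symmetric and both weights of `T` agree, and
`M i j = μ_{i + j - 1} - μ_{i + j}`, which determines `T`. Conversely this matrix telescopes to
`∑_{i' ≥ i} M i' j = μ_{i + j - 1}`, so it has both weights `μ` and satisfies the Yamanouchi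
inequalities with equality.
-/

section Yamanouchi

theorem yamanouchi_iff {w : List ℕ} :
    Yamanouchi w ↔ ∀ s, s <:+ w → ∀ j, s.count (j + 2) ≤ s.count (j + 1) := by
  simp only [Yamanouchi, List.mem_tails]
  refine ⟨fun h s hs j => h (j + 1) (by omega) s hs, fun h i hi s hs => ?_⟩
  obtain ⟨j, rfl⟩ := Nat.exists_eq_add_of_le' hi
  exact h s hs j

theorem exists_suffix_count_eq_zero {row : List ℕ} (hrow : row.Pairwise (· ≤ ·)) (j : ℕ) :
    ∃ t, t <:+ row ∧ t.count j = 0 ∧ t.count (j + 1) = row.count (j + 1) := by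
  induction row with
  | nil => exact ⟨[], by simp⟩
  | cons a row ih =>
    obtain ⟨ha, hrow⟩ := List.pairwise_cons.1 hrow
    rcases le_or_gt a j with haj | haj
    · obtain ⟨t, ht, h0, h1⟩ := ih hrow
      refine ⟨t, ht.trans (List.suffix_cons a row), h0, ?_⟩
      rw [h1, List.count_cons_of_ne (by omega)]
    · refine ⟨a :: row, List.suffix_rfl, List.count_eq_zero.2 fun hj => ?_, rfl⟩
      rcases List.mem_cons.1 hj with rfl | hj
      · exact haj.false
      · exact (haj.trans_le (ha j hj)).false

theorem yamanouchi_append_iff {row rest : List ℕ} (hrow : row.Pairwise (· ≤ ·)) :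
    Yamanouchi (row ++ rest) ↔
      (∀ j, (row ++ rest).count (j + 2) ≤ rest.count (j + 1)) ∧ Yamanouchi rest := by
  simp only [yamanouchi_iff]
  refine ⟨fun h => ⟨fun j => ?_, fun s hs => h s (List.suffix_append_of_suffix hs)⟩, ?_⟩
  · -- The binding suffix is the one that cuts `row` just before its letters exceeding `j + 1`.
    obtain ⟨t, ht, h0, h1⟩ := exists_suffix_count_eq_zero hrow (j + 1)
    simpa [h0, h1] using h (t ++ rest) (List.suffix_append_self_iff.2 ht) j
  · rintro ⟨hcount, hrest⟩ s hs j
    rcases List.suffix_or_suffix_of_suffix hs (List.suffix_append row rest) with h | h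
    · exact hrest s h j
    · calc s.count (j + 2) ≤ (row ++ rest).count (j + 2) := hs.sublist.count_le _
        _ ≤ rest.count (j + 1) := hcount j
        _ ≤ s.count (j + 1) := h.sublist.count_le _

theorem yamanouchi_flatten_iff {rows : List (List ℕ)}
    (hrows : ∀ row ∈ rows, row.Pairwise (· ≤ ·)) :
    Yamanouchi rows.flatten ↔ ∀ i j,
      (rows.drop i).flatten.count (j + 2) ≤ (rows.drop (i + 1)).flatten.count (j + 1) := by
  induction rows with
  | nil => simp [yamanouchi_iff]
  | cons row rows ih =>
    obtain ⟨hrow, hrows⟩ := List.forall_mem_cons.1 hrows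
    rw [List.flatten_cons, yamanouchi_append_iff hrow, ih hrows]
    exact Nat.and_forall_add_one (p := fun i => ∀ j, ((row :: rows).drop i).flatten.count (j + 2) ≤
      ((row :: rows).drop (i + 1)).flatten.count (j + 1))

end Yamanouchi

section Tails

variable {L : List (ℕ × ℕ)} {n m : ℕ}

/-- The number of boxes `(i', j)` of `L` with `i' > i`, a tail sum of column `j` of the matrix of
box multiplicities. The strict inequality makes `i = 0` the full column although coordinates start
at `1`. -/
def colTail (L : List (ℕ × ℕ)) (i j : ℕ) : ℕ :=
  L.countP fun p => i < p.1 ∧ p.2 = j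

/-- The number of boxes `(i', j')` of `L` with `i' > i` and `j' > j`, in which the two Yamanouchi
conditions become opposite inequalities. -/
def quadrant (L : List (ℕ × ℕ)) (i j : ℕ) : ℕ :=
  L.countP fun p => i < p.1 ∧ j < p.2

theorem countP_eq_countP_add_countP {α : Type*} {P Q R : α → Prop} [DecidablePred P]
    [DecidablePred Q] [DecidablePred R] (hP : ∀ a, P a ↔ Q a ∨ R a) (hQR : ∀ a, Q a → ¬R a)
    (l : List α) : l.countP P = l.countP Q + l.countP R := by
  induction l with
  | nil => simp
  | cons a l ih =>
    have := hP a
    have := hQR a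
    grind

theorem colTail_eq_count_add_colTail (L : List (ℕ × ℕ)) (i j : ℕ) :
    colTail L i j = L.count (i + 1, j) + colTail L (i + 1) j := by
  have hcount : L.count (i + 1, j) = L.countP fun p => p = (i + 1, j) := by
    simp only [List.count, beq_eq_decide]
  rw [hcount]
  exact countP_eq_countP_add_countP (Q := fun p => p = (i + 1, j)) (by grind) (by grind) L

theorem quadrant_eq_colTail_add_quadrant (L : List (ℕ × ℕ)) (i j : ℕ) :
    quadrant L i j = colTail L i (j + 1) + quadrant L i (j + 1) :=
  countP_eq_countP_add_countP (by omega) (by omega) L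

theorem exists_forall_mem_le (L : List (ℕ × ℕ)) (k : ℕ) :
    ∃ N, k ≤ N ∧ ∀ p ∈ L, p.1 ≤ N ∧ p.2 ≤ N := by
  obtain ⟨⟨b, c⟩, hbc⟩ := L.toFinset.exists_le
  refine ⟨k + b + c, by omega, fun p hp => ?_⟩
  obtain ⟨hb, hc⟩ := hbc p (List.mem_toFinset.2 hp)
  omega

theorem colTail_eq_zero (hL : ∀ p ∈ L, p.1 ≤ n) {i : ℕ} (hi : n ≤ i) (j : ℕ) :
    colTail L i j = 0 := by
  simp only [colTail, List.countP_eq_zero, decide_eq_true_eq]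
  intro p hp
  have := hL p hp
  omega

theorem quadrant_eq_zero (hL : ∀ p ∈ L, p.2 ≤ m) (i : ℕ) {j : ℕ} (hj : m ≤ j) :
    quadrant L i j = 0 := by
  simp only [quadrant, List.countP_eq_zero, decide_eq_true_eq]
  intro p hp
  have := hL p hp
  omega

theorem quadrant_map_swap (L : List (ℕ × ℕ)) (i j : ℕ) :
    quadrant (L.map Prod.swap) i j = quadrant L j i := by
  simp only [quadrant, List.countP_map]
  exact List.countP_congr fun p _ => by simp [and_comm]

theorem quadrant_zero_zero (hL : ∀ p ∈ L, 0 < p.1 ∧ 0 < p.2) : quadrant L 0 0 = L.length :=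
  List.countP_eq_length.2 fun p hp => decide_eq_true (hL p hp)

theorem quadrant_zero_right_eq_sum (hL : ∀ p ∈ L, p.2 ≤ m) (i : ℕ) :
    quadrant L i 0 = ∑ j ∈ Finset.range m, colTail L i (j + 1) := by
  have hsum (k : ℕ) :
      quadrant L i 0 = ∑ j ∈ Finset.range k, colTail L i (j + 1) + quadrant L i k := by
    induction k with
    | zero => simp
    | succ k ih =>
      rw [ih, Finset.sum_range_succ, quadrant_eq_colTail_add_quadrant L i k, add_assoc]
  rw [hsum m, quadrant_eq_zero hL i le_rfl, add_zero]

theorem length_filter_snd_eq (hL : ∀ p ∈ L, 0 < p.1) (j : ℕ) :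
    (L.filter fun p => decide (p.2 = j)).length = colTail L 0 j := by
  rw [← List.countP_eq_length_filter]
  exact List.countP_congr fun p hp => by simp [hL p hp]

end Tails

instance : IsTrans (ℕ × ℕ) lexLe := ⟨fun _ _ _ => by unfold lexLe; omega⟩

instance : Std.Antisymm lexLe := ⟨fun _ _ h h' => by
  unfold lexLe at h h'
  exact Prod.ext (by omega) (by omega)⟩

instance : Std.Total lexLe := ⟨fun _ _ => by unfold lexLe; omega⟩

theorem count_sort_lexLe (S : Multiset (ℕ × ℕ)) (p : ℕ × ℕ) :
    (S.sort lexLe).count p = S.count p := by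
  conv_rhs => rw [← Multiset.sort_eq S lexLe, Multiset.coe_count]
  simp only [List.count, beq_eq_decide]

section ReadingWords

variable {L : List (ℕ × ℕ)} {n m r : ℕ}

/-- The block of second coordinates that the boxes with first coordinate `k + 1` contribute to the
reading word `wRow`. -/
def wBlock (L : List (ℕ × ℕ)) (k : ℕ) : List ℕ :=
  (L.filter fun p => decide (p.1 = k + 1)).map Prod.snd

theorem IsRowBitab.pairwise_lexLe (hL : IsRowBitab n m r L) : L.Pairwise lexLe :=
  List.isChain_iff_pairwise.1 hL.2.2

theorem wRow_eq_flatten (n : ℕ) (L : List (ℕ × ℕ)) :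
    wRow n L = ((List.range n).map (wBlock L)).flatten :=
  List.flatMap_def

theorem uRow_eq_wRow_map_swap (m : ℕ) (L : List (ℕ × ℕ)) :
    uRow m L = wRow m (L.map Prod.swap) := by
  simp only [uRow, wRow, List.filter_map, List.map_map]
  rfl

theorem count_wBlock (L : List (ℕ × ℕ)) (k j : ℕ) :
    (wBlock L k).count j = L.count (k + 1, j) := by
  rw [wBlock, List.count, List.count, List.countP_map, List.countP_filter]
  exact List.countP_congr fun p _ => by simp [Prod.ext_iff, and_comm]

theorem count_flatten_drop_wBlock (hL : ∀ p ∈ L, p.1 ≤ n) (i j : ℕ) :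
    (((List.range n).map (wBlock L)).drop i).flatten.count j = colTail L i j := by
  have hbase {k : ℕ} (hk : n ≤ k) :
      (((List.range n).map (wBlock L)).drop k).flatten.count j = colTail L k j := by
    rw [List.drop_eq_nil_of_le (by simpa using hk), colTail_eq_zero hL hk]
    rfl
  rcases le_total n i with hi | hi
  · exact hbase hi
  · induction hi using Nat.decreasingInduction with
    | self => exact hbase le_rfl
    | of_succ i hi ih =>
      rw [List.drop_eq_getElem_cons (by simpa using hi), List.flatten_cons, List.count_append, ih,
        List.getElem_map, List.getElem_range, count_wBlock, ← colTail_eq_count_add_colTail]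

theorem yamanouchi_wRow_iff_of_pairwise (hsort : L.Pairwise fun p q => p.1 = q.1 → p.2 ≤ q.2)
    (hL : ∀ p ∈ L, p.1 ≤ n) :
    Yamanouchi (wRow n L) ↔ ∀ i j, colTail L i (j + 2) ≤ colTail L (i + 1) (j + 1) := by
  have hblock (k : ℕ) : (wBlock L k).Pairwise (· ≤ ·) := by
    rw [wBlock, List.pairwise_map, List.pairwise_filter]
    refine hsort.imp fun h hp hq => h ?_
    rw [of_decide_eq_true hp, of_decide_eq_true hq]
  rw [wRow_eq_flatten, yamanouchi_flatten_iff (List.forall_mem_map.2 fun k _ => hblock k)]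
  simp only [count_flatten_drop_wBlock hL]

theorem IsRowBitab.yamanouchi_wRow_iff (hL : IsRowBitab n m r L) :
    Yamanouchi (wRow n L) ↔ ∀ i j, colTail L i (j + 2) ≤ colTail L (i + 1) (j + 1) := by
  refine yamanouchi_wRow_iff_of_pairwise (hL.pairwise_lexLe.imp ?_) fun p hp => (hL.2.1 p hp).1.2
  unfold lexLe
  omega

theorem IsRowBitab.yamanouchi_uRow_iff (hL : IsRowBitab n m r L) :
    Yamanouchi (uRow m L) ↔ ∀ i j,
      colTail (L.map Prod.swap) i (j + 2) ≤ colTail (L.map Prod.swap) (i + 1) (j + 1) := by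
  rw [uRow_eq_wRow_map_swap]
  refine yamanouchi_wRow_iff_of_pairwise (List.pairwise_map.2 (hL.pairwise_lexLe.imp ?_))
    (List.forall_mem_map.2 fun p hp => (hL.2.1 p hp).2.2)
  unfold lexLe
  simp only [Prod.fst_swap, Prod.snd_swap]
  omega

end ReadingWords

section Hankel

variable {L : List (ℕ × ℕ)} {a : ℕ → ℕ} {n m r : ℕ}

/-- The box multiplicities of `L` form the Hankel matrix of the differences of `a`. The sequence is
indexed from `0` and the coordinates from `1`; for `a k = μ_{k + 1}` the multiplicity of `(i, j)`
is `μ_{i + j - 1} - μ_{i + j}`. -/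
def HankelCounts (L : List (ℕ × ℕ)) (a : ℕ → ℕ) : Prop :=
  ∀ i j, L.count (i + 1, j + 1) = a (i + j) - a (i + j + 1)

theorem HankelCounts.map_swap (h : HankelCounts L a) : HankelCounts (L.map Prod.swap) a :=
  fun i j => by
    rw [← Prod.swap_prod_mk, List.count_map_of_injective L _ Prod.swap_injective, h, add_comm j]

theorem HankelCounts.colTail_eq (h : HankelCounts L a) (ha : Antitone a)
    (ha0 : ∀ k, n ≤ k → a k = 0) (i j : ℕ) : colTail L i (j + 1) = a (i + j) := by
  obtain ⟨N, hN, hL⟩ := exists_forall_mem_le L (max n i)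
  rw [max_le_iff] at hN
  obtain ⟨hn, hi⟩ := hN
  induction hi using Nat.decreasingInduction with
  | self =>
    rw [colTail_eq_zero (fun p hp => (hL p hp).1) le_rfl, ha0 _ (hn.trans (Nat.le_add_right N j))]
  | of_succ i hi ih =>
    rw [colTail_eq_count_add_colTail, h, ih, add_right_comm i 1 j]
    exact Nat.sub_add_cancel (ha (Nat.le_succ _))

theorem hankelCounts_of_colTail_eq (h : ∀ i j, colTail L i (j + 1) = a (i + j)) :
    HankelCounts L a := fun i j => by
  have := colTail_eq_count_add_colTail L i (j + 1)
  rw [h, h, add_right_comm i 1 j] at this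
  omega

theorem quadrant_succ_right_le
    (h : ∀ i j, colTail L i (j + 2) ≤ colTail L (i + 1) (j + 1)) (i j : ℕ) :
    quadrant L i (j + 1) ≤ quadrant L (i + 1) j := by
  obtain ⟨N, hj, hL⟩ := exists_forall_mem_le L j
  induction hj using Nat.decreasingInduction with
  | self =>
    rw [quadrant_eq_zero (fun p hp => (hL p hp).2) i (Nat.le_succ N)]
    exact Nat.zero_le _
  | of_succ j hj ih =>
    rw [quadrant_eq_colTail_add_quadrant L i (j + 1), quadrant_eq_colTail_add_quadrant L (i + 1) j]
    exact Nat.add_le_add (h i j) ih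

theorem IsRowBitab.quadrant_succ_right_eq (hL : IsRowBitab n m r L) (hw : Yamanouchi (wRow n L))
    (hu : Yamanouchi (uRow m L)) (i j : ℕ) : quadrant L i (j + 1) = quadrant L (i + 1) j := by
  refine (quadrant_succ_right_le (hL.yamanouchi_wRow_iff.1 hw) i j).antisymm ?_
  simpa only [quadrant_map_swap] using quadrant_succ_right_le (hL.yamanouchi_uRow_iff.1 hu) j i

theorem quadrant_eq_quadrant_zero (h : ∀ i j, quadrant L i (j + 1) = quadrant L (i + 1) j)
    (i j : ℕ) : quadrant L i j = quadrant L 0 (i + j) := by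
  induction i generalizing j with
  | zero => rw [zero_add]
  | succ i ih => rw [← h, ih, add_right_comm, add_assoc]

theorem colTail_eq_colTail_zero (h : ∀ i j, quadrant L i (j + 1) = quadrant L (i + 1) j)
    (i j : ℕ) : colTail L i (j + 1) = colTail L 0 (i + j + 1) := by
  have hij := quadrant_eq_colTail_add_quadrant L i j
  have h0 := quadrant_eq_colTail_add_quadrant L 0 (i + j)
  rw [quadrant_eq_quadrant_zero h, quadrant_eq_quadrant_zero h i (j + 1), ← add_assoc] at hij
  omega

theorem colTail_map_swap_zero_eq (h : ∀ i j, quadrant L i (j + 1) = quadrant L (i + 1) j)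
    (k : ℕ) : colTail (L.map Prod.swap) 0 (k + 1) = colTail L 0 (k + 1) := by
  have hrow := quadrant_eq_colTail_add_quadrant (L.map Prod.swap) 0 k
  have hcol := quadrant_eq_colTail_add_quadrant L 0 k
  rw [quadrant_map_swap, quadrant_map_swap, quadrant_eq_quadrant_zero h,
    quadrant_eq_quadrant_zero h (k + 1), add_zero, add_zero] at hrow
  omega

theorem IsRowBitab.count_eq_zero (hL : IsRowBitab n m r L) {p : ℕ × ℕ} (hp : p.1 = 0 ∨ p.2 = 0) :
    L.count p = 0 :=
  List.count_eq_zero.2 fun hmem => by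
    have := hL.2.1 p hmem
    omega

theorem IsRowBitab.eq_of_hankelCounts {L' : List (ℕ × ℕ)} {n' m' r' : ℕ}
    (hL : IsRowBitab n m r L) (hL' : IsRowBitab n' m' r' L') (h : HankelCounts L a)
    (h' : HankelCounts L' a) : L = L' := by
  refine List.Perm.eq_of_pairwise' hL.pairwise_lexLe hL'.pairwise_lexLe
    (List.perm_iff_count.2 ?_)
  rintro ⟨_ | i, _ | j⟩
  case succ.succ => rw [h, h']
  all_goals rw [hL.count_eq_zero (by simp), hL'.count_eq_zero (by simp)]

theorem exists_isRowBitab_hankelCounts (ha : Antitone a) (han : ∀ k, n ≤ k → a k = 0)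
    (ham : ∀ k, m ≤ k → a k = 0) :
    ∃ L, IsRowBitab n m (∑ k ∈ Finset.range m, a k) L ∧ HankelCounts L a := by
  let S : Multiset (ℕ × ℕ) := ∑ x ∈ Finset.range n ×ˢ Finset.range m,
    Multiset.replicate (a (x.1 + x.2) - a (x.1 + x.2 + 1)) (x.1 + 1, x.2 + 1)
  have hbox : ∀ p ∈ S.sort lexLe, (1 ≤ p.1 ∧ p.1 ≤ n) ∧ (1 ≤ p.2 ∧ p.2 ≤ m) := by
    intro p hp
    obtain ⟨x, hx, hpx⟩ := Multiset.mem_sum.1 ((Multiset.mem_sort _).1 hp)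
    rw [Multiset.eq_of_mem_replicate hpx]
    simp only [Finset.mem_product, Finset.mem_range] at hx
    omega
  have hcounts : HankelCounts (S.sort lexLe) a := fun i j => by
    have hshift (x : ℕ × ℕ) : (x.1 + 1, x.2 + 1) = (i + 1, j + 1) ↔ x = (i, j) := by
      simp [Prod.ext_iff]
    simp only [count_sort_lexLe, S, Multiset.count_sum', Multiset.count_replicate, hshift,
      Finset.sum_ite_eq']
    split_ifs with hij
    · rfl
    · simp only [Finset.mem_product, Finset.mem_range] at hij
      have : a (i + j) = 0 := by
        rcases lt_or_ge i n with hi | hi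
        · exact ham _ (by omega)
        · exact han _ (by omega)
      omega
  refine ⟨S.sort lexLe, ⟨?_, hbox, ?_⟩, hcounts⟩
  · calc (S.sort lexLe).length = quadrant (S.sort lexLe) 0 0 :=
          (quadrant_zero_zero fun p hp => ⟨(hbox p hp).1.1, (hbox p hp).2.1⟩).symm
      _ = ∑ k ∈ Finset.range m, colTail (S.sort lexLe) 0 (k + 1) :=
          quadrant_zero_right_eq_sum (fun p hp => (hbox p hp).2.2) 0
      _ = ∑ k ∈ Finset.range m, a k := by simp only [hcounts.colTail_eq ha han, zero_add]
  · exact List.isChain_iff_pairwise.2 (Multiset.pairwise_sort _ _)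

end Hankel

section Partition

variable {L : List (ℕ × ℕ)} {n m r : ℕ}

theorem antitone_getD_of_pairwise {l : List ℕ} (hl : l.Pairwise (· ≥ ·)) :
    Antitone fun k => l.getD k 0 := by
  refine antitone_nat_of_succ_le fun k => ?_
  rcases lt_or_ge (k + 1) l.length with hk | hk
  · rw [List.getD_eq_getElem _ _ hk, List.getD_eq_getElem _ _ (Nat.lt_of_succ_lt hk)]
    exact List.pairwise_iff_getElem.1 hl k (k + 1) _ hk (Nat.lt_succ_self k)
  · rw [List.getD_eq_default _ _ hk]
    exact Nat.zero_le _

theorem sum_range_getD {M : Type*} [AddCommMonoid M] {l : List M} {m : ℕ} (hm : l.length ≤ m) :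
    ∑ k ∈ Finset.range m, l.getD k 0 = l.sum := by
  induction l generalizing m with
  | nil => simp
  | cons x l ih =>
    obtain ⟨m, rfl⟩ := Nat.exists_eq_add_of_le' (Nat.one_le_of_lt hm)
    rw [Finset.sum_range_succ', List.sum_cons, add_comm x]
    exact congrArg (· + x) (ih (Nat.le_of_succ_le_succ hm))

theorem eq_of_getD_eq {α : Type*} {d : α} {l l' : List α} (hl : d ∉ l) (hl' : d ∉ l')
    (h : ∀ k, l.getD k d = l'.getD k d) : l = l' := by
  refine List.ext_getElem? fun k => ?_
  have := h k
  grind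

theorem antitone_partAt_succ (μ : Nat.Partition r) : Antitone fun k => partAt μ (k + 1) :=
  antitone_getD_of_pairwise (Multiset.pairwise_sort _ _)

theorem partAt_succ_eq_zero {μ : Nat.Partition r} (hμ : μ.parts.card ≤ n) {k : ℕ} (hk : n ≤ k) :
    partAt μ (k + 1) = 0 :=
  List.getD_eq_default _ _ (by simpa using hμ.trans hk)

theorem sum_partAt_succ {μ : Nat.Partition r} (hμ : μ.parts.card ≤ n) :
    ∑ k ∈ Finset.range n, partAt μ (k + 1) = r := by
  refine (sum_range_getD (by simpa using hμ)).trans ?_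
  rw [← Multiset.sum_coe, Multiset.sort_eq, μ.parts_sum]

theorem partition_eq_of_partAt_eq {μ ν : Nat.Partition r}
    (h : ∀ k, partAt μ (k + 1) = partAt ν (k + 1)) : μ = ν := by
  have hpos (μ : Nat.Partition r) : 0 ∉ μ.parts.sort (· ≥ ·) := fun h0 =>
    (μ.parts_pos ((Multiset.mem_sort _).1 h0)).false
  refine Nat.Partition.ext ?_
  rw [← Multiset.sort_eq μ.parts (· ≥ ·), eq_of_getD_eq (hpos μ) (hpos ν) h, Multiset.sort_eq]

theorem length_filter_snd_eq_partAt_iff {ν : Nat.Partition r} (hν : ν.parts.card ≤ m)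
    (hL₁ : ∀ p ∈ L, 0 < p.1) (hL₂ : ∀ p ∈ L, p.2 ≤ m) :
    (∀ j ∈ Finset.Icc 1 m, (L.filter fun p => decide (p.2 = j)).length = partAt ν j) ↔
      ∀ k, colTail L 0 (k + 1) = partAt ν (k + 1) := by
  simp only [length_filter_snd_eq hL₁, Finset.mem_Icc]
  refine ⟨fun h k => ?_, fun h j hj => ?_⟩
  · rcases lt_or_ge k m with hk | hk
    · exact h (k + 1) (by omega)
    · have := quadrant_eq_colTail_add_quadrant L 0 k
      rw [quadrant_eq_zero hL₂ 0 hk] at this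
      rw [partAt_succ_eq_zero hν hk]
      omega
  · obtain ⟨k, rfl⟩ := Nat.exists_eq_add_of_le' hj.1
    exact h k

theorem length_filter_fst_eq_partAt_iff {μ : Nat.Partition r} (hμ : μ.parts.card ≤ n)
    (hL₁ : ∀ p ∈ L, p.1 ≤ n) (hL₂ : ∀ p ∈ L, 0 < p.2) :
    (∀ i ∈ Finset.Icc 1 n, (L.filter fun p => decide (p.1 = i)).length = partAt μ i) ↔
      ∀ k, colTail (L.map Prod.swap) 0 (k + 1) = partAt μ (k + 1) := by
  rw [← length_filter_snd_eq_partAt_iff hμ (List.forall_mem_map.2 hL₂)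
    (List.forall_mem_map.2 hL₁)]
  simp only [List.filter_map, List.length_map]
  rfl

end Partition

section Counting

variable {L : List (ℕ × ℕ)} {n m r : ℕ}

theorem IsRowBitab.weights_eq_and_yamanouchi_iff (hL : IsRowBitab n m r L)
    {μ ν : Nat.Partition r} (hμ : μ.parts.card ≤ n) (hν : ν.parts.card ≤ m) :
    ((∀ i ∈ Finset.Icc 1 n, (L.filter fun p => decide (p.1 = i)).length = partAt μ i) ∧
      (∀ j ∈ Finset.Icc 1 m, (L.filter fun p => decide (p.2 = j)).length = partAt ν j) ∧
      Yamanouchi (wRow n L) ∧ Yamanouchi (uRow m L)) ↔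
      μ = ν ∧ HankelCounts L fun k => partAt μ (k + 1) := by
  rw [length_filter_fst_eq_partAt_iff hμ (fun p hp => (hL.2.1 p hp).1.2)
      (fun p hp => (hL.2.1 p hp).2.1),
    length_filter_snd_eq_partAt_iff hν (fun p hp => (hL.2.1 p hp).1.1)
      (fun p hp => (hL.2.1 p hp).2.2)]
  constructor
  · rintro ⟨ha, hb, hw, hu⟩
    have hquad := hL.quadrant_succ_right_eq hw hu
    have hμν : μ = ν := partition_eq_of_partAt_eq fun k => by
      rw [← ha, ← hb, colTail_map_swap_zero_eq hquad]
    refine ⟨hμν, hankelCounts_of_colTail_eq fun i j => ?_⟩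
    rw [colTail_eq_colTail_zero hquad, hb, hμν]
  · rintro ⟨rfl, h⟩
    have hzero : ∀ k, n ≤ k → partAt μ (k + 1) = 0 := fun k => partAt_succ_eq_zero hμ
    have hcol := h.colTail_eq (antitone_partAt_succ μ) hzero
    have hrow := h.map_swap.colTail_eq (antitone_partAt_succ μ) hzero
    rw [hL.yamanouchi_wRow_iff, hL.yamanouchi_uRow_iff]
    refine ⟨fun k => ?_, fun k => ?_, fun i j => ?_, fun i j => ?_⟩
    · rw [hrow, zero_add]
    · rw [hcol, zero_add]
    · rw [hcol, hcol, add_right_comm i 1 j, ← add_assoc]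
    · rw [hrow, hrow, add_right_comm i 1 j, ← add_assoc]

theorem rowList_injective : Function.Injective (rowList : (Fin r → Fin n × Fin m) → _) := by
  refine (List.map_injective_iff.2 ?_).comp List.ofFn_injective
  rintro ⟨i, j⟩ ⟨i', j'⟩ h
  simpa [Fin.ext_iff] using h

theorem IsRowBitab.exists_rowList_eq (hL : IsRowBitab n m r L) :
    ∃ v : Fin r → Fin n × Fin m, rowList v = L := by
  obtain ⟨rfl, hbox, -⟩ := hL
  have hget (t : Fin L.length) := hbox _ (L.get_mem t)
  let v (t : Fin L.length) : Fin n × Fin m :=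
    (⟨(L.get t).1 - 1, by have := hget t; omega⟩, ⟨(L.get t).2 - 1, by have := hget t; omega⟩)
  have hv (t : Fin L.length) : (((v t).1 : ℕ) + 1, ((v t).2 : ℕ) + 1) = L.get t :=
    Prod.ext (Nat.sub_add_cancel (hget t).1.1) (Nat.sub_add_cancel (hget t).2.1)
  refine ⟨v, ?_⟩
  rw [rowList, List.map_ofFn]
  exact (congrArg List.ofFn (funext hv)).trans (List.ofFn_get L)

theorem existsUnique_rowList_hankelCounts {μ : Nat.Partition r} (hn : μ.parts.card ≤ n)
    (hm : μ.parts.card ≤ m) :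
    ∃! v : Fin r → Fin n × Fin m, IsRowBitab n m r (rowList v) ∧
      HankelCounts (rowList v) fun k => partAt μ (k + 1) := by
  obtain ⟨L, hL, hcounts⟩ := exists_isRowBitab_hankelCounts (antitone_partAt_succ μ)
    (fun _ => partAt_succ_eq_zero hn) (fun _ => partAt_succ_eq_zero hm)
  rw [sum_partAt_succ hm] at hL
  obtain ⟨v, rfl⟩ := hL.exists_rowList_eq
  exact ⟨v, ⟨hL, hcounts⟩, fun v' ⟨hL', hcounts'⟩ =>
    rowList_injective (hL'.eq_of_hankelCounts hL hcounts' hcounts)⟩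

end Counting

/-- Let `μ ⊢ r` have at most `n` parts and `ν ⊢ r` have at most `m` parts.
The number of one-row lexicographic bitableaux `T ∈ B_{(r)}(n,m)` with `a(T) = μ`,
`b(T) = ν`, and both `w(T)` and `u(T)` Yamanouchi is `1` if `μ = ν` and `0` otherwise. -/
theorem stmt_9 (r n m : ℕ) (hn : 1 ≤ n) (hm : 1 ≤ m)
    (μ ν : Nat.Partition r) (hμ : μ.parts.card ≤ n) (hν : ν.parts.card ≤ m) :
    ((Finset.univ : Finset (Fin r → Fin n × Fin m)).filter fun v =>
        IsRowBitab n m r (rowList v) ∧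
        (∀ i ∈ Finset.Icc 1 n, ((rowList v).filter fun p => decide (p.1 = i)).length = partAt μ i) ∧
        (∀ j ∈ Finset.Icc 1 m, ((rowList v).filter fun p => decide (p.2 = j)).length = partAt ν j) ∧
        Yamanouchi (wRow n (rowList v)) ∧ Yamanouchi (uRow m (rowList v))).card =
      if μ = ν then 1 else 0 := by
  have hiff (v : Fin r → Fin n × Fin m) :=
    and_congr_right fun hv : IsRowBitab n m r (rowList v) => hv.weights_eq_and_yamanouchi_iff hμ hν
  simp only [hiff]
  split_ifs with hμν
  · subst hμν
    simp only [true_and]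
    exact (Fintype.existsUnique_iff_card_one _).1 (existsUnique_rowList_hankelCounts hμ hν)
  · simp [hμν]
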